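/- Let α : H →* G and β : K →* G be surjective group homomorphisms, and let L = {(h, k) : H × K // α h = β k} be the pullback subgroup of H × K, with projection homomorphisms δ : L →* H and γ : L →* K. Then: (1) δ and γ are surjective; (2) the join (ker δ) ⊔ (ker γ) of the kernels of the projections equals the subgroup {(h, k) ∈ L | α h = 1 ∧ β k = 1}; and (3) the homomorphism λ : L →* G defined by λ(h, k) = α h is surjective with kernel (ker δ) ⊔ (ker γ), so that L ⧸ ((ker δ) ⊔ (ker γ)) ≃* G. -/

import Mathlib

/-!
Surjectivity of `α` and `β` lets any `h` or `k` be completed to a pair in the pullback `L`.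
A pair `(h, k)` with `α h = 1 = β k` factors inside `L` as `(1, k) * (h, 1)`, a product of an
element of `ker δ` and an element of `ker γ`; this gives the join of the kernels. Since
`α h = β k` on `L`, the condition `α h = 1` already forces `β k = 1`, so that join is the kernel
of `(h, k) ↦ α h`, and the first isomorphism theorem identifies the quotient with `G`.
-/

section

variable {H K G : Type*} [Group H] [Group K] [Group G]

/-- The pullback group of two homomorphisms `α : H →* G`, `β : K →* G`: the subgroup
`{(h, k) : H × K // α h = β k}` of `H × K`. -/
def pullbackSubgroup (α : H →* G) (β : K →* G) : Subgroup (H × K) where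
  carrier := {p | α p.1 = β p.2}
  one_mem' := by simp
  mul_mem' := by
    intro a b ha hb
    simp only [Set.mem_setOf_eq, Prod.fst_mul, Prod.snd_mul, map_mul] at *
    rw [ha, hb]
  inv_mem' := by
    intro a ha
    simp only [Set.mem_setOf_eq, Prod.fst_inv, Prod.snd_inv, map_inv] at *
    rw [ha]

/-- The projection `L →* H` from the pullback group. -/
def pullbackFst (α : H →* G) (β : K →* G) : ↥(pullbackSubgroup α β) →* H :=
  (MonoidHom.fst H K).comp (pullbackSubgroup α β).subtype

/-- The projection `L →* K` from the pullback group. -/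
def pullbackSnd (α : H →* G) (β : K →* G) : ↥(pullbackSubgroup α β) →* K :=
  (MonoidHom.snd H K).comp (pullbackSubgroup α β).subtype

/-- The subgroup `{(h, k) ∈ L | α h = 1 ∧ β k = 1}` of the pullback group `L`. -/
def pullbackKerSubgroup (α : H →* G) (β : K →* G) : Subgroup ↥(pullbackSubgroup α β) where
  carrier := {p | α (p : H × K).1 = 1 ∧ β (p : H × K).2 = 1}
  one_mem' := by simp
  mul_mem' := by
    rintro ⟨⟨h1, k1⟩, _⟩ ⟨⟨h2, k2⟩, _⟩ ⟨ha1, ha2⟩ ⟨hb1, hb2⟩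
    exact ⟨by simp [map_mul, ha1, hb1], by simp [map_mul, ha2, hb2]⟩
  inv_mem' := by
    rintro ⟨⟨h1, k1⟩, _⟩ ⟨ha1, ha2⟩
    exact ⟨by simp [ha1], by simp [ha2]⟩

/-- For surjective homomorphisms `α : H ↠ G` and `β : K ↠ G` with pullback group
`L = {(h, k) | α h = β k}`: the two projections `δ : L →* H` and `γ : L →* K` are
surjective; the join of their kernels is `{(h, k) ∈ L | α h = 1 ∧ β k = 1}`; and the
homomorphism `λ(h, k) = α h` is surjective with kernel `ker δ ⊔ ker γ`, so that
`L ⧸ (ker δ ⊔ ker γ) ≃* G`. -/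
theorem pullback_projections_surjective_ker_join (α : H →* G) (β : K →* G)
    (hα : Function.Surjective α) (hβ : Function.Surjective β) :
    Function.Surjective (pullbackFst α β) ∧ Function.Surjective (pullbackSnd α β) ∧
    (pullbackFst α β).ker ⊔ (pullbackSnd α β).ker = pullbackKerSubgroup α β ∧
    Function.Surjective (α.comp (pullbackFst α β)) ∧
    (α.comp (pullbackFst α β)).ker = (pullbackFst α β).ker ⊔ (pullbackSnd α β).ker ∧
    Nonempty ((↥(pullbackSubgroup α β) ⧸ (α.comp (pullbackFst α β)).ker) ≃* G) := by
  have hδ : Function.Surjective (pullbackFst α β) := fun h => by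
    obtain ⟨k, hk⟩ := hβ (α h)
    exact ⟨⟨(h, k), hk.symm⟩, rfl⟩
  have hγ : Function.Surjective (pullbackSnd α β) := fun k => by
    obtain ⟨h, hh⟩ := hα (β k)
    exact ⟨⟨(h, k), hh⟩, rfl⟩
  have hjoin : (pullbackFst α β).ker ⊔ (pullbackSnd α β).ker = pullbackKerSubgroup α β := by
    apply le_antisymm
    · refine sup_le ?_ ?_
      · rintro ⟨⟨h, k⟩, hp⟩ (h1 : h = 1)
        change α h = β k at hp
        subst h1
        exact ⟨map_one α, hp.symm.trans (map_one α)⟩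
      · rintro ⟨⟨h, k⟩, hp⟩ (h1 : k = 1)
        change α h = β k at hp
        subst h1
        exact ⟨hp.trans (map_one β), map_one β⟩
    · rintro ⟨⟨h, k⟩, hp⟩ ⟨h1, h2⟩
      change α h = 1 at h1
      change β k = 1 at h2
      -- Both factors of `(h, k) = (1, k) * (h, 1)` lie in the pullback since `α h = β k = 1`.
      have hk : ((1, k) : H × K) ∈ pullbackSubgroup α β := (map_one α).trans h2.symm
      have hh : ((h, 1) : H × K) ∈ pullbackSubgroup α β := h1.trans (map_one β).symm
      have hmul : (⟨(h, k), hp⟩ : ↥(pullbackSubgroup α β)) = ⟨(1, k), hk⟩ * ⟨(h, 1), hh⟩ :=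
        Subtype.ext (Prod.ext (one_mul h).symm (mul_one k).symm)
      rw [hmul]
      exact Subgroup.mul_mem_sup (MonoidHom.mem_ker.mpr rfl) (MonoidHom.mem_ker.mpr rfl)
  have hsurj : Function.Surjective (α.comp (pullbackFst α β)) := hα.comp hδ
  refine ⟨hδ, hγ, hjoin, hsurj, ?_,
    ⟨QuotientGroup.quotientKerEquivOfSurjective _ hsurj⟩⟩
  rw [hjoin]
  ext ⟨⟨h, k⟩, hp⟩
  exact ⟨fun h1 => ⟨h1, Eq.trans (Eq.symm hp) h1⟩, fun h1 => h1.1⟩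

end
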